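/- Let ρ_ABC be a density matrix (positive semidefinite with trace 1) on the tensor product of finite-dimensional complex Hilbert spaces H_A ⊗ H_B ⊗ H_C. Then for every α ∈ (1/2,1), Tr{ ( ρ_AC^{(1−α)/(2α)} ρ_C^{(α−1)/(2α)} ρ_BC^{(1−α)/α} ρ_C^{(α−1)/(2α)} ρ_AC^{(1−α)/(2α)} )^{α/(1−α)} } ≤ 1. -/

import Mathlib

open scoped ComplexOrder Matrix

/-- Real power of a Hermitian matrix, taken on its support:
for `A = ∑ᵢ λᵢ |i⟩⟨i|`, `mpow A t = ∑_{i : λᵢ ≠ 0} λᵢ^t |i⟩⟨i|`.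
(For non-Hermitian input we return the junk value `0`.) -/
noncomputable def mpow {n : Type*} [Fintype n] [DecidableEq n]
    (A : Matrix n n ℂ) (t : ℝ) : Matrix n n ℂ :=
  if h : A.IsHermitian then
    (h.eigenvectorUnitary : Matrix n n ℂ) *
      Matrix.diagonal (fun i => ((if h.eigenvalues i = 0 then (0:ℝ)
        else (h.eigenvalues i) ^ t) : ℂ)) *
      (star h.eigenvectorUnitary : Matrix n n ℂ)
  else 0

/-- The reduced matrix `ρ_AC` of a tripartite matrix, viewed as the operator
`ρ_AC ⊗ I_B` on the full space. -/
noncomputable def redAC {dA dB dC : ℕ}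
    (ρ : Matrix (Fin dA × Fin dB × Fin dC) (Fin dA × Fin dB × Fin dC) ℂ) :
    Matrix (Fin dA × Fin dB × Fin dC) (Fin dA × Fin dB × Fin dC) ℂ :=
  fun x y => (if x.2.1 = y.2.1 then (1:ℂ) else 0) *
    ∑ m : Fin dB, ρ (x.1, m, x.2.2) (y.1, m, y.2.2)

/-- The reduced matrix `ρ_BC` of a tripartite matrix, viewed as the operator
`I_A ⊗ ρ_BC` on the full space. -/
noncomputable def redBC {dA dB dC : ℕ}
    (ρ : Matrix (Fin dA × Fin dB × Fin dC) (Fin dA × Fin dB × Fin dC) ℂ) :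
    Matrix (Fin dA × Fin dB × Fin dC) (Fin dA × Fin dB × Fin dC) ℂ :=
  fun x y => (if x.1 = y.1 then (1:ℂ) else 0) * ∑ m : Fin dA, ρ (m, x.2) (m, y.2)

/-- The reduced matrix `ρ_C` of a tripartite matrix, viewed as the operator
`I_A ⊗ I_B ⊗ ρ_C` on the full space. -/
noncomputable def redC {dA dB dC : ℕ}
    (ρ : Matrix (Fin dA × Fin dB × Fin dC) (Fin dA × Fin dB × Fin dC) ℂ) :
    Matrix (Fin dA × Fin dB × Fin dC) (Fin dA × Fin dB × Fin dC) ℂ :=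
  fun x y => (if x.1 = y.1 then (1:ℂ) else 0) * (if x.2.1 = y.2.1 then (1:ℂ) else 0) *
    ∑ m : Fin dA, ∑ l : Fin dB, ρ (m, l, x.2.2) (m, l, y.2.2)

open Matrix

/-- Functional calculus of a Hermitian matrix. -/
noncomputable def hfun {n : Type*} [Fintype n] [DecidableEq n] {A : Matrix n n ℂ}
    (h : A.IsHermitian) (f : ℝ → ℂ) : Matrix n n ℂ :=
  (h.eigenvectorUnitary : Matrix n n ℂ) * Matrix.diagonal (fun i => f (h.eigenvalues i)) *
    (star h.eigenvectorUnitary : Matrix n n ℂ)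

/-- Complex power of a real number, zero at zero. -/
noncomputable def pw (z : ℂ) (x : ℝ) : ℂ := if x = 0 then 0 else (x : ℂ) ^ z

section basics
variable {n m : Type*} [Fintype n] [DecidableEq n] [Fintype m] [DecidableEq m]
  {A : Matrix n n ℂ} {B : Matrix m m ℂ}

lemma eig_star_mul (h : A.IsHermitian) :
    (star h.eigenvectorUnitary : Matrix n n ℂ) * (h.eigenvectorUnitary : Matrix n n ℂ) = 1 := by
  exact Unitary.coe_star_mul_self h.eigenvectorUnitary

lemma eig_mul_star (h : A.IsHermitian) :
    (h.eigenvectorUnitary : Matrix n n ℂ) * (star h.eigenvectorUnitary : Matrix n n ℂ) = 1 := by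
  exact Unitary.coe_mul_star_self h.eigenvectorUnitary

lemma hfun_mul (h : A.IsHermitian) (f g : ℝ → ℂ) :
    hfun h f * hfun h g = hfun h (fun x => f x * g x) := by
  unfold hfun
  rw [← Matrix.diagonal_mul_diagonal]
  simp only [Matrix.mul_assoc]
  rw [← Matrix.mul_assoc (star _) (h.eigenvectorUnitary : Matrix n n ℂ), eig_star_mul,
    Matrix.one_mul]

lemma hfun_conjTranspose (h : A.IsHermitian) (f : ℝ → ℂ) :
    (hfun h f)ᴴ = hfun h (fun x => star (f x)) := by
  unfold hfun
  rw [Matrix.conjTranspose_mul, Matrix.conjTranspose_mul, Matrix.diagonal_conjTranspose,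
    Matrix.star_eq_conjTranspose, Matrix.conjTranspose_conjTranspose, Matrix.mul_assoc]
  rfl

lemma hfun_id (h : A.IsHermitian) : hfun h (fun x => (x : ℂ)) = A := by
  conv_rhs => rw [h.spectral_theorem, Unitary.conjStarAlgAut_apply]
  rfl

lemma hfun_one (h : A.IsHermitian) : hfun h (fun _ => 1) = 1 := by
  unfold hfun
  rw [Matrix.diagonal_one, Matrix.mul_one, eig_mul_star]

lemma hfun_sub (h : A.IsHermitian) (f g : ℝ → ℂ) :
    hfun h f - hfun h g = hfun h (fun x => f x - g x) := by
  unfold hfun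
  rw [← Matrix.sub_mul, ← Matrix.mul_sub, Matrix.diagonal_sub]

lemma hfun_trace (h : A.IsHermitian) (f : ℝ → ℂ) :
    (hfun h f).trace = ∑ i, f (h.eigenvalues i) := by
  unfold hfun
  rw [Matrix.trace_mul_comm, ← Matrix.mul_assoc, eig_star_mul, Matrix.one_mul, Matrix.trace_diagonal]

lemma hfun_congr (h : A.IsHermitian) {f g : ℝ → ℂ}
    (hfg : ∀ i, f (h.eigenvalues i) = g (h.eigenvalues i)) : hfun h f = hfun h g := by
  unfold hfun
  simp only [hfg]

lemma hfun_posSemidef (h : A.IsHermitian) {f : ℝ → ℂ}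
    (hf : ∀ i, 0 ≤ f (h.eigenvalues i)) : (hfun h f).PosSemidef := by
  unfold hfun
  rw [Matrix.star_eq_conjTranspose]
  exact (Matrix.PosSemidef.diagonal hf).mul_mul_conjTranspose_same _

lemma hfun_intertwine (hA : A.IsHermitian) (hB : B.IsHermitian) (V : Matrix n m ℂ)
    (hV : A * V = V * B) (f : ℝ → ℂ) : hfun hA f * V = V * hfun hB f := by
  set U := (hA.eigenvectorUnitary : Matrix n n ℂ) with hU
  set W := (hB.eigenvectorUnitary : Matrix m m ℂ) with hW
  have key : ∀ g : ℝ → ℂ, (hfun hA g * V = V * hfun hB g ↔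
      Matrix.diagonal (fun i => g (hA.eigenvalues i)) * (star U * V * W) =
        (star U * V * W) * Matrix.diagonal (fun i => g (hB.eigenvalues i))) := by
    intro g
    have e1 : star U * U = 1 := eig_star_mul hA
    have e2 : U * star U = 1 := eig_mul_star hA
    have e3 : star W * W = 1 := eig_star_mul hB
    have e4 : W * star W = 1 := eig_mul_star hB
    unfold hfun
    constructor
    · intro hh
      have := congrArg (fun X => star U * X * W) hh
      simp only [Matrix.mul_assoc] at this ⊢
      rw [← Matrix.mul_assoc (star U) (hA.eigenvectorUnitary : Matrix n n ℂ)] at this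
      simp only [← hU, ← hW, e1, e3, Matrix.one_mul, Matrix.mul_one] at this
      exact this
    · intro hh
      have := congrArg (fun X => U * X * star W) hh
      simp only [Matrix.mul_assoc] at this ⊢
      rw [← Matrix.mul_assoc U (star U)] at this
      simp only [← hU, ← hW, e2, e4, Matrix.one_mul, Matrix.mul_one] at this
      exact this
  rw [key]
  have h1 := (key (fun x => (x : ℂ))).1 (by rw [hfun_id, hfun_id, hV])
  ext i j
  have h2 := congrFun (congrFun h1 i) j
  rw [Matrix.diagonal_mul, Matrix.mul_diagonal] at h2 ⊢
  by_cases hz : (star U * V * W) i j = 0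
  · rw [hz]; simp
  · rw [mul_comm] at h2
    have := mul_left_cancel₀ hz h2
    rw [Complex.ofReal_inj.1 this, mul_comm]

end basics

lemma pw_mul (z w : ℂ) (x : ℝ) : pw z x * pw w x = pw (z + w) x := by
  unfold pw
  split_ifs with h
  · simp
  · rw [Complex.cpow_add _ _ (by exact_mod_cast h)]

lemma pw_star (z : ℂ) {x : ℝ} (hx : 0 ≤ x) : star (pw z x) = pw (star z) x := by
  unfold pw
  split_ifs with h
  · simp
  · have := Complex.cpow_conj (x : ℂ) z (by rw [Complex.arg_ofReal_of_nonneg hx]; exact Real.pi_ne_zero.symm)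
    rw [Complex.conj_ofReal] at this
    exact this.symm

lemma pw_one (x : ℝ) : pw 1 x = x := by
  unfold pw
  split_ifs with h <;> simp [h]

lemma pw_real (t : ℝ) {x : ℝ} (hx : 0 ≤ x) : pw t x = ((if x = 0 then 0 else x ^ t : ℝ) : ℂ) := by
  unfold pw
  split_ifs with h
  · simp
  · rw [Complex.ofReal_cpow hx]

lemma pw_norm (z : ℂ) (hz : z.re = 0) {x : ℝ} (hx : 0 ≤ x) : ‖pw z x‖ ≤ 1 := by
  unfold pw
  split_ifs with h
  · simp
  · rw [Complex.norm_cpow_eq_rpow_re_of_pos (lt_of_le_of_ne hx (Ne.symm h)), hz, Real.rpow_zero]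

section pows
variable {n : Type*} [Fintype n] [DecidableEq n] {A : Matrix n n ℂ}

/-- Complex power of a PSD matrix. -/
noncomputable def hp (h : A.PosSemidef) (z : ℂ) : Matrix n n ℂ := hfun h.isHermitian (pw z)

lemma hp_mul (h : A.PosSemidef) (z w : ℂ) : hp h z * hp h w = hp h (z + w) := by
  unfold hp
  rw [hfun_mul]
  simp only [pw_mul]

lemma hp_star (h : A.PosSemidef) (z : ℂ) : (hp h z)ᴴ = hp h (star z) := by
  unfold hp
  rw [hfun_conjTranspose]
  exact hfun_congr _ fun i => pw_star z (h.eigenvalues_nonneg i)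

lemma hp_one (h : A.PosSemidef) : hp h 1 = A := by
  conv_rhs => rw [← hfun_id h.isHermitian]
  exact hfun_congr _ fun i => pw_one _

lemma hp_mul_self (h : A.PosSemidef) (z : ℂ) : hp h z * A = hp h (z + 1) := by
  have := hp_mul h z 1
  rwa [hp_one] at this

lemma self_mul_hp (h : A.PosSemidef) (z : ℂ) : A * hp h z = hp h (1 + z) := by
  have := hp_mul h 1 z
  rwa [hp_one] at this

lemma mpow_eq (h : A.PosSemidef) (t : ℝ) : mpow A t = hp h t := by
  unfold mpow hp hfun
  rw [dif_pos h.isHermitian]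
  congr 2
  congr 1
  ext i
  unfold pw
  split_ifs with h0
  · simp
  · have hx := h.eigenvalues_nonneg i
    generalize h.isHermitian.eigenvalues i = x at *
    lift x to NNReal using hx
    have := CFC.rpow_algebraMap (A := ℂ) (x := x) (y := t)
    exact this.trans (Complex.ofReal_cpow x.2 t)

/-- `K Kᴴ ≤ 1`. -/
def Contr (K : Matrix n n ℂ) : Prop := (1 - K * Kᴴ).PosSemidef

lemma Contr.mul {K L : Matrix n n ℂ} (hK : Contr K) (hL : Contr L) : Contr (K * L) := by
  unfold Contr at *
  have : 1 - K * L * (K * L)ᴴ = (1 - K * Kᴴ) + K * (1 - L * Lᴴ) * Kᴴ := by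
    rw [Matrix.conjTranspose_mul]
    noncomm_ring
  rw [this]
  exact hK.add (hL.mul_mul_conjTranspose_same K)

lemma hp_contr (h : A.PosSemidef) (z : ℂ) (hz : z.re = 0) : Contr (hp h z) := by
  unfold Contr hp
  rw [hfun_conjTranspose, hfun_mul, ← hfun_one h.isHermitian, hfun_sub]
  apply hfun_posSemidef
  intro i
  have := pw_norm z hz (h.eigenvalues_nonneg i)
  rw [sub_nonneg]
  change _ * (starRingEnd ℂ) _ ≤ _
  rw [Complex.mul_conj, Complex.normSq_eq_norm_sq]
  have h2 : ‖pw z (h.isHermitian.eigenvalues i)‖ ^ 2 ≤ 1 := pow_le_one₀ (norm_nonneg _) this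
  exact_mod_cast h2

lemma trace_cs (X Y : Matrix n n ℂ) :
    ‖(X * Y).trace‖ ^ 2 ≤ (X * Xᴴ).trace.re * (Yᴴ * Y).trace.re := by
  have e1 : (X * Xᴴ).trace.re = ∑ p : n × n, ‖X p.1 p.2‖ ^ 2 := by
    rw [Fintype.sum_prod_type]
    simp [Matrix.trace, Matrix.mul_apply, Complex.mul_conj, Complex.normSq_eq_norm_sq,
      ← Complex.ofReal_pow]
  have e2 : (Yᴴ * Y).trace.re = ∑ p : n × n, ‖Y p.2 p.1‖ ^ 2 := by
    rw [Fintype.sum_prod_type]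
    simp [Matrix.trace, Matrix.mul_apply, Complex.conj_mul', ← Complex.ofReal_pow]
  have e3 : ‖(X * Y).trace‖ ≤ ∑ p : n × n, ‖X p.1 p.2‖ * ‖Y p.2 p.1‖ := by
    have : (X * Y).trace = ∑ p : n × n, X p.1 p.2 * Y p.2 p.1 := by
      rw [Fintype.sum_prod_type]
      simp [Matrix.trace, Matrix.mul_apply]
    rw [this]
    refine (norm_sum_le _ _).trans (le_of_eq ?_)
    simp
  rw [e1, e2]
  exact (pow_le_pow_left₀ (norm_nonneg _) e3 2).trans (Finset.sum_mul_sq_le_sq_mul_sq _ _ _)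

end pows

/-- Entire and bounded on the strip. -/
def Good (f : ℂ → ℂ) : Prop :=
  Differentiable ℂ f ∧ ∃ C, ∀ z ∈ Complex.HadamardThreeLines.verticalClosedStrip 0 1, ‖f z‖ ≤ C

lemma Good.const (c : ℂ) : Good (fun _ => c) := ⟨differentiable_const c, ‖c‖, fun _ _ => le_rfl⟩

lemma Good.mul {f g : ℂ → ℂ} (hf : Good f) (hg : Good g) : Good (fun z => f z * g z) := by
  obtain ⟨C, hC⟩ := hf.2
  obtain ⟨D, hD⟩ := hg.2
  refine ⟨hf.1.mul hg.1, C * D, fun z hz => ?_⟩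
  rw [norm_mul]
  exact mul_le_mul (hC z hz) (hD z hz) (norm_nonneg _) ((norm_nonneg _).trans (hC z hz))

lemma Good.sum {ι : Type*} (s : Finset ι) {f : ι → ℂ → ℂ} (hf : ∀ i, Good (f i)) :
    Good (fun z => ∑ i ∈ s, f i z) := by
  choose C hC using fun i => (hf i).2
  refine ⟨Differentiable.fun_sum fun i _ => (hf i).1, ∑ i ∈ s, C i, fun z hz => ?_⟩
  exact (norm_sum_le _ _).trans (Finset.sum_le_sum fun i _ => hC i z hz)

lemma Good.pw {x : ℝ} (hx : 0 ≤ x) (a b : ℝ) : Good (fun z => pw (a + b * z) x) := by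
  by_cases h : x = 0
  · have : (fun z : ℂ => _root_.pw (a + b * z) x) = fun _ => 0 := by
      ext z; simp [_root_.pw, h]
    rw [this]
    exact Good.const 0
  · have hx0 : 0 < x := lt_of_le_of_ne hx (Ne.symm h)
    have : (fun z : ℂ => _root_.pw (a + b * z) x) = fun z => (x : ℂ) ^ ((a : ℂ) + b * z) := by
      ext z; simp [_root_.pw, h]
    rw [this]
    refine ⟨?_, Real.exp (|Real.log x| * (|a| + |b|)), fun z hz => ?_⟩
    · intro z
      exact DifferentiableAt.const_cpow (by fun_prop) (Or.inl (by exact_mod_cast h))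
    · rw [Complex.norm_cpow_eq_rpow_re_of_pos hx0, Real.rpow_def_of_pos hx0]
      apply Real.exp_le_exp.2
      have hzz : 0 ≤ z.re ∧ z.re ≤ 1 := hz
      have h1 : ((a : ℂ) + b * z).re = a + b * z.re := by simp
      rw [h1]
      refine (le_abs_self _).trans ?_
      rw [abs_mul]
      gcongr
      refine (abs_add_le _ _).trans ?_
      refine add_le_add le_rfl ?_
      rw [abs_mul, abs_of_nonneg hzz.1]
      exact mul_le_of_le_one_right (abs_nonneg _) hzz.2

/-- Matrix-valued good functions. -/
def MGood {n m : Type*} (F : ℂ → Matrix n m ℂ) : Prop := ∀ i j, Good (fun z => F z i j)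

section mg
variable {n : Type*} [Fintype n] [DecidableEq n] {A : Matrix n n ℂ}

lemma MGood.const (X : Matrix n n ℂ) : MGood (fun _ => X) := fun i j => Good.const _

lemma MGood.mul {F G : ℂ → Matrix n n ℂ} (hF : MGood F) (hG : MGood G) :
    MGood (fun z => F z * G z) := by
  intro i j
  simp only [Matrix.mul_apply]
  exact Good.sum _ fun k => (hF i k).mul (hG k j)

lemma MGood.trace {F : ℂ → Matrix n n ℂ} (hF : MGood F) : Good (fun z => (F z).trace) := by
  simp only [Matrix.trace, Matrix.diag]
  exact Good.sum _ fun k => hF k k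

lemma MGood.hp (h : A.PosSemidef) (a b : ℝ) : MGood (fun z => hp h (a + b * z)) := by
  unfold _root_.hp hfun
  refine (MGood.mul (MGood.const _) ?_).mul (MGood.const _)
  intro i j
  by_cases hij : i = j
  · subst hij
    simp only [Matrix.diagonal_apply_eq]
    exact Good.pw (h.eigenvalues_nonneg i) a b
  · simp only [Matrix.diagonal_apply_ne _ hij]
    exact Good.const 0

end mg

section core
variable {n : Type*} [Fintype n] [DecidableEq n] {P Q R : Matrix n n ℂ}

/-- The interpolating family. -/
noncomputable def Fam (hP : P.PosSemidef) (hQ : Q.PosSemidef) (hR : R.PosSemidef) (z : ℂ) :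
    Matrix n n ℂ := hp hP z * hp hQ (-z) * hp hR z

lemma hp_trace {A : Matrix n n ℂ} (h : A.PosSemidef) (t : ℝ) :
    ∃ T : ℝ, 0 ≤ T ∧ (hp h t).trace = (T : ℂ) := by
  refine ⟨∑ i, (if h.isHermitian.eigenvalues i = 0 then 0
    else h.isHermitian.eigenvalues i ^ t : ℝ), ?_, ?_⟩
  · refine Finset.sum_nonneg fun i _ => ?_
    split_ifs
    · exact le_rfl
    · exact Real.rpow_nonneg (h.eigenvalues_nonneg i) _
  · unfold hp
    rw [hfun_trace, Complex.ofReal_sum]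
    exact Finset.sum_congr rfl fun i _ => pw_real t (h.eigenvalues_nonneg i)

theorem core (hP : P.PosSemidef) (hQ : Q.PosSemidef) (hR : R.PosSemidef)
    (hF : ∀ w : ℂ, w.re = 1 / 2 → ((Fam hP hQ hR w)ᴴ * Fam hP hQ hR w).trace.re ≤ 1)
    (s p : ℝ) (hs : 0 < s) (hs1 : s < 1) (hsp : p * s = 1) (M : Matrix n n ℂ)
    (hM : M = Fam hP hQ hR ((s / 2 : ℝ) : ℂ)) (hN : (Mᴴ * M).PosSemidef) :
    (hp hN p).trace ≤ 1 := by
  obtain ⟨T, hT0, hT⟩ := hp_trace hN p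
  rw [hT]
  suffices hh : T ≤ 1 by exact_mod_cast hh
  set g : ℂ → ℂ := fun z => (hp hN (((p - 1/2 : ℝ) : ℂ) + ((-(p/2) : ℝ) : ℂ) * z) * Mᴴ *
    (hp hP (((0 : ℝ) : ℂ) + ((1/2 : ℝ) : ℂ) * z) * hp hQ (((0 : ℝ) : ℂ) + ((-(1/2) : ℝ) : ℂ) * z) *
      hp hR (((0 : ℝ) : ℂ) + ((1/2 : ℝ) : ℂ) * z))).trace with hg
  have hgood : Good g := by
    apply MGood.trace
    exact ((MGood.hp hN _ _).mul (MGood.const _)).mul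
      (((MGood.hp hP _ _).mul (MGood.hp hQ _ _)).mul (MGood.hp hR _ _))
  have hgF : ∀ z, g z = (hp hN (p - 1/2 - p/2 * z) * Mᴴ * Fam hP hQ hR (z/2)).trace := by
    intro z
    simp only [hg, Fam]
    have e1 : ((p - 1/2 : ℝ) : ℂ) + ((-(p/2) : ℝ) : ℂ) * z = p - 1/2 - p/2 * z := by
      push_cast; ring
    have e2 : ((0 : ℝ) : ℂ) + ((1/2 : ℝ) : ℂ) * z = z/2 := by push_cast; ring
    have e3 : ((0 : ℝ) : ℂ) + ((-(1/2) : ℝ) : ℂ) * z = -(z/2) := by push_cast; ring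
    rw [e1, e2, e3]
  have hY : ∀ w : ℂ, w.re = (p - 1) / 2 →
      (hp hN w * Mᴴ) * (hp hN w * Mᴴ)ᴴ = hp hN p := by
    intro w hw
    rw [Matrix.conjTranspose_mul, Matrix.conjTranspose_conjTranspose, hp_star]
    have : hp hN w * Mᴴ * (M * hp hN (star w)) = hp hN w * (Mᴴ * M) * hp hN (star w) := by
      simp only [Matrix.mul_assoc]
    rw [this]
    rw [hp_mul_self, hp_mul]
    congr 1
    apply Complex.ext
    · simp [hw]; ring
    · simp
  have hTre : (hp hN p).trace.re = T := by rw [hT]; simp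
  have hg0 : ∀ z ∈ Complex.re ⁻¹' {(0:ℝ)}, ‖g z‖ ≤ T := by
    intro z hz
    have hz : z.re = 0 := hz
    set w : ℂ := (p - 1) / 2 - p / 2 * z with hw
    have hwre : w.re = (p - 1) / 2 := by
      simp [hw, hz]
    have hcon : Contr (Fam hP hQ hR (z/2)) := by
      unfold Fam
      exact ((hp_contr hP _ (by simp [hz])).mul (hp_contr hQ _ (by simp [hz]))).mul
        (hp_contr hR _ (by simp [hz]))
    set F := Fam hP hQ hR (z/2) with hFd
    have e : g z = ((hp hN w * Mᴴ * F) * hp hN ((p/2 : ℝ) : ℂ)).trace := by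
      rw [hgF, Matrix.trace_mul_comm _ (hp hN ((p/2 : ℝ) : ℂ)), ← Matrix.mul_assoc,
        ← Matrix.mul_assoc, hp_mul]
      congr 4
      rw [hw]; push_cast; ring
    have cs := trace_cs (hp hN w * Mᴴ * F) (hp hN ((p/2 : ℝ) : ℂ))
    rw [← e] at cs
    have h2 : (hp hN ((p/2 : ℝ) : ℂ))ᴴ * hp hN ((p/2 : ℝ) : ℂ) = hp hN p := by
      rw [hp_star, hp_mul]
      congr 1
      simp
    have h1 : ((hp hN w * Mᴴ * F) * (hp hN w * Mᴴ * F)ᴴ).trace.re ≤ T := by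
      have hps : ((hp hN w * Mᴴ) * (1 - F * Fᴴ) * (hp hN w * Mᴴ)ᴴ).PosSemidef :=
        Matrix.PosSemidef.mul_mul_conjTranspose_same hcon _
      have hnn := hps.trace_nonneg
      have heq : (hp hN w * Mᴴ) * (1 - F * Fᴴ) * (hp hN w * Mᴴ)ᴴ = hp hN p -
          (hp hN w * Mᴴ * F) * (hp hN w * Mᴴ * F)ᴴ := by
        rw [← hY w hwre, Matrix.conjTranspose_mul (hp hN w * Mᴴ) F]
        noncomm_ring
      rw [heq, Matrix.trace_sub] at hnn
      have := (Complex.le_def.1 hnn).1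
      simp only [Complex.sub_re, Complex.zero_re, hTre] at this
      linarith
    rw [h2, hTre] at cs
    have : ‖g z‖ ^ 2 ≤ T ^ 2 := by nlinarith
    exact le_of_sq_le_sq this hT0
  have hg1 : ∀ z ∈ Complex.re ⁻¹' {(1:ℝ)}, ‖g z‖ ≤ Real.sqrt T := by
    intro z hz
    have hz : z.re = 1 := hz
    set w : ℂ := p - 1/2 - p / 2 * z with hw
    have hwre : w.re = (p - 1) / 2 := by
      simp [hw, hz]; ring
    have cs := trace_cs (hp hN w * Mᴴ) (Fam hP hQ hR (z/2))
    rw [← hgF, hY w hwre, hTre] at cs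
    have := hF (z/2) (by simp [hz])
    apply Real.le_sqrt_of_sq_le
    nlinarith
  have hgs : g s = T := by
    rw [hgF]
    have e1 : (s : ℂ) / 2 = ((s/2 : ℝ) : ℂ) := by push_cast; rfl
    rw [e1, ← hM, Matrix.mul_assoc, ← hT]
    have e2 : (p : ℂ) - 1/2 - p/2 * s = p - 1 := by
      have : (p : ℂ) * s = 1 := by exact_mod_cast hsp
      linear_combination (-1/2 : ℂ) * this
    rw [e2]
    have := hp_mul hN (p - 1) 1
    rw [hp_one, sub_add_cancel] at this
    rw [this]
  have h3 := Complex.HadamardThreeLines.norm_le_interp_of_mem_verticalClosedStrip₀₁' g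
    (z := (s : ℂ)) (a := T) (b := Real.sqrt T) (by
      simp only [Complex.HadamardThreeLines.verticalClosedStrip, Set.mem_preimage,
        Complex.ofReal_re]
      exact ⟨hs.le, hs1.le⟩)
    hgood.1.diffContOnCl (by
      obtain ⟨C, hC⟩ := hgood.2
      refine ⟨C, ?_⟩
      rintro _ ⟨z, hz, rfl⟩
      exact hC z hz) hg0 hg1
  rw [hgs, Complex.norm_real, Real.norm_of_nonneg hT0, Complex.ofReal_re] at h3
  by_contra hT1
  push Not at hT1
  have hTpos : 0 < T := by linarith
  rw [Real.sqrt_eq_rpow, ← Real.rpow_mul hT0, ← Real.rpow_add hTpos] at h3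
  have : T ^ (1 - s + 1/2 * s) < T ^ (1:ℝ) := Real.rpow_lt_rpow_of_exponent_lt hT1 (by linarith)
  rw [Real.rpow_one] at this
  linarith

end core

section red
variable {dA dB dC : ℕ}
    {ρ : Matrix (Fin dA × Fin dB × Fin dC) (Fin dA × Fin dB × Fin dC) ℂ}

/-- The reduced matrix on `C` alone. -/
noncomputable def mC (ρ : Matrix (Fin dA × Fin dB × Fin dC) (Fin dA × Fin dB × Fin dC) ℂ) :
    Matrix (Fin dC) (Fin dC) ℂ :=
  ∑ a : Fin dA, ∑ b : Fin dB, ρ.submatrix (fun c => (a, b, c)) (fun c => (a, b, c))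

lemma mC_psd (h : ρ.PosSemidef) : (mC ρ).PosSemidef :=
  Matrix.posSemidef_sum _ fun _ _ => Matrix.posSemidef_sum _ fun _ _ => h.submatrix _

lemma mC_apply (c d : Fin dC) : mC ρ c d = ∑ a : Fin dA, ∑ b : Fin dB, ρ (a, b, c) (a, b, d) := by
  simp [mC, Matrix.sum_apply]

lemma mC_trace : (mC ρ).trace = ρ.trace := by
  simp only [Matrix.trace, Matrix.diag, mC_apply, Fintype.sum_prod_type]
  rw [Finset.sum_comm]
  exact Finset.sum_congr rfl fun a _ => Finset.sum_comm

lemma redAC_psd (h : ρ.PosSemidef) : (redAC ρ).PosSemidef := by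
  have : redAC ρ = ((1 : Matrix (Fin dB) (Fin dB) ℂ).submatrix (fun x : Fin dA × Fin dB × Fin dC => x.2.1) (fun x => x.2.1)) ⊙
      ∑ m : Fin dB, ρ.submatrix (fun x => (x.1, m, x.2.2)) (fun x => (x.1, m, x.2.2)) := by
    ext x y
    simp [redAC, Matrix.sum_apply, Matrix.one_apply]
  rw [this]
  exact (Matrix.PosSemidef.one.submatrix _).hadamard
    (Matrix.posSemidef_sum _ fun _ _ => h.submatrix _)

lemma redBC_psd (h : ρ.PosSemidef) : (redBC ρ).PosSemidef := by
  have : redBC ρ = ((1 : Matrix (Fin dA) (Fin dA) ℂ).submatrix (fun x : Fin dA × Fin dB × Fin dC => x.1) (fun x => x.1)) ⊙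
      ∑ m : Fin dA, ρ.submatrix (fun x => (m, x.2)) (fun x => (m, x.2)) := by
    ext x y
    simp [redBC, Matrix.sum_apply, Matrix.one_apply]
  rw [this]
  exact (Matrix.PosSemidef.one.submatrix _).hadamard
    (Matrix.posSemidef_sum _ fun _ _ => h.submatrix _)

lemma redC_psd (h : ρ.PosSemidef) : (redC ρ).PosSemidef := by
  have : redC ρ = ((1 : Matrix (Fin dA) (Fin dA) ℂ).submatrix (fun x : Fin dA × Fin dB × Fin dC => x.1) (fun x => x.1)) ⊙
      (((1 : Matrix (Fin dB) (Fin dB) ℂ).submatrix (fun x : Fin dA × Fin dB × Fin dC => x.2.1) (fun x => x.2.1)) ⊙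
      (mC ρ).submatrix (fun x => x.2.2) (fun x => x.2.2)) := by
    ext x y
    simp only [redC, mC_apply, Matrix.one_apply, Matrix.hadamard_apply, Matrix.submatrix_apply,
      mul_assoc]
  rw [this]
  exact (Matrix.PosSemidef.one.submatrix _).hadamard
    ((Matrix.PosSemidef.one.submatrix _).hadamard ((mC_psd h).submatrix _))

/-- A power of `redC ρ` acts only on `C`. -/
lemma hp_redC (h : ρ.PosSemidef) (z : ℂ) (a a' : Fin dA) (b b' : Fin dB) (c c' : Fin dC) :
    hp (redC_psd h) z (a, b, c) (a', b', c') =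
      if a = a' then if b = b' then hp (mC_psd h) z c c' else 0 else 0 := by
  set V : Matrix (Fin dA × Fin dB × Fin dC) (Fin dC) ℂ :=
    Matrix.of fun x d => if x = (a', b', d) then 1 else 0 with hV0
  have hV : ∀ x d, V x d = if x = (a', b', d) then 1 else 0 := fun x d => rfl
  clear_value V
  have hcomm : redC ρ * V = V * mC ρ := by
    ext x d
    obtain ⟨x1, x2, x3⟩ := x
    simp only [Matrix.mul_apply, hV, mul_ite, mul_one, mul_zero, Finset.sum_ite_eq',
      Finset.sum_ite_eq, Finset.mem_univ, if_true, redC, ← mC_apply, Prod.mk.injEq, ite_mul,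
      one_mul, zero_mul]
    by_cases h1 : x1 = a' <;> by_cases h2 : x2 = b' <;> simp [h1, h2]
  have := hfun_intertwine (redC_psd h).isHermitian (mC_psd h).isHermitian V hcomm (pw z)
  have := congrFun (congrFun this (a, b, c)) c'
  simp only [Matrix.mul_apply, hV, mul_ite, mul_one, mul_zero, Finset.sum_ite_eq',
      Finset.sum_ite_eq, Finset.mem_univ, if_true, Prod.mk.injEq, ite_mul,
      one_mul, zero_mul] at this
  unfold hp
  rw [this]
  by_cases h1 : a = a' <;> by_cases h2 : b = b' <;> simp [h1, h2]

lemma trace_red (X : Matrix (Fin dA × Fin dB × Fin dC) (Fin dA × Fin dB × Fin dC) ℂ)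
    (X' : Matrix (Fin dA × Fin dB × Fin dC) (Fin dA × Fin dB × Fin dC) ℂ)
    (Y Y' : Matrix (Fin dC) (Fin dC) ℂ)
    (hX : ∀ a a' b b' c c', X (a, b, c) (a', b', c') =
      if a = a' then if b = b' then Y c c' else 0 else 0)
    (hX' : ∀ a a' b b' c c', X' (a, b, c) (a', b', c') =
      if a = a' then if b = b' then Y' c c' else 0 else 0) :
    (redAC ρ * (X' * redBC ρ * X)).trace = (mC ρ * (Y' * mC ρ * Y)).trace := by
  have hZ : ∀ a a' b b' c c', (X' * redBC ρ * X) (a, b, c) (a', b', c') =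
      if a = a' then ∑ d, (∑ e, Y' c e * ∑ m, ρ (m, b, e) (m, b', d)) * Y d c' else 0 := by
    intro a a' b b' c c'
    simp only [Matrix.mul_apply, Fintype.sum_prod_type, hX, hX', redBC, mul_ite, ite_mul, mul_zero,
      zero_mul, one_mul, Finset.sum_ite_irrel, Finset.sum_const_zero, Finset.sum_ite_eq,
      Finset.sum_ite_eq', Finset.mem_univ, if_true]
  have lhs : (redAC ρ * (X' * redBC ρ * X)).trace = ∑ a, ∑ b, ∑ c, ∑ c',
      (∑ m, ρ (a, m, c) (a, m, c')) *
        ∑ d, (∑ e, Y' c' e * ∑ m, ρ (m, b, e) (m, b, d)) * Y d c := by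
    generalize hZe : X' * redBC ρ * X = Z at *
    simp only [Matrix.trace, Matrix.diag, Matrix.mul_apply, Fintype.sum_prod_type, hZ, redAC,
      mul_ite, ite_mul, mul_zero, zero_mul, one_mul, Finset.sum_ite_irrel, Finset.sum_const_zero,
      Finset.sum_ite_eq, Finset.sum_ite_eq', Finset.mem_univ, if_true]
  rw [lhs]
  have rhs : (mC ρ * (Y' * mC ρ * Y)).trace = ∑ c, ∑ c', (∑ a, ∑ m, ρ (a, m, c) (a, m, c')) *
        ∑ b, ∑ d, (∑ e, Y' c' e * ∑ m, ρ (m, b, e) (m, b, d)) * Y d c := by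
    simp only [Matrix.trace, Matrix.diag, Matrix.mul_apply, mC_apply]
    refine Finset.sum_congr rfl fun c _ => Finset.sum_congr rfl fun c' _ => ?_
    congr 1
    rw [Finset.sum_comm]
    refine Finset.sum_congr rfl fun d _ => ?_
    rw [← Finset.sum_mul]
    congr 1
    rw [Finset.sum_comm]
    refine Finset.sum_congr rfl fun e _ => ?_
    rw [← Finset.mul_sum]
    congr 1
    exact Finset.sum_comm
  rw [rhs]
  simp only [Finset.sum_mul_sum (ι := Fin dA) (κ := Fin dB)]
  calc _ = ∑ a : Fin dA, ∑ c : Fin dC, ∑ b : Fin dB, ∑ c' : Fin dC, _ :=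
        Finset.sum_congr rfl fun a _ => Finset.sum_comm
    _ = ∑ c : Fin dC, ∑ a : Fin dA, ∑ b : Fin dB, ∑ c' : Fin dC, _ := Finset.sum_comm
    _ = ∑ c : Fin dC, ∑ a : Fin dA, ∑ c' : Fin dC, ∑ b : Fin dB, _ :=
        Finset.sum_congr rfl fun c _ => Finset.sum_congr rfl fun a _ => Finset.sum_comm
    _ = ∑ c : Fin dC, ∑ c' : Fin dC, ∑ a : Fin dA, ∑ b : Fin dB, _ :=
        Finset.sum_congr rfl fun c _ => Finset.sum_comm

lemma edge (h : ρ.PosSemidef) (h1 : ρ.trace = 1) (w : ℂ) (hw : w.re = 1 / 2) :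
    ((Fam (redBC_psd h) (redC_psd h) (redAC_psd h) w)ᴴ *
      Fam (redBC_psd h) (redC_psd h) (redAC_psd h) w).trace.re ≤ 1 := by
  have hww : star w + w = 1 := by
    apply Complex.ext
    · simp [hw]; norm_num
    · simp
  have hww' : w + star w = 1 := by rw [add_comm, hww]
  have e : ((Fam (redBC_psd h) (redC_psd h) (redAC_psd h) w)ᴴ *
      Fam (redBC_psd h) (redC_psd h) (redAC_psd h) w).trace =
      (redAC ρ * (hp (redC_psd h) (-star w) * redBC ρ * hp (redC_psd h) (-w))).trace := by
    have eB : redBC ρ = hp (redBC_psd h) (star w) * hp (redBC_psd h) w := by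
      rw [hp_mul, hww, hp_one]
    have eA : redAC ρ = hp (redAC_psd h) w * hp (redAC_psd h) (star w) := by
      rw [hp_mul, hww', hp_one]
    unfold Fam
    simp only [Matrix.conjTranspose_mul, hp_star, star_neg]
    conv_rhs => rw [eA, eB]
    rw [Matrix.mul_assoc (hp (redAC_psd h) w), Matrix.trace_mul_comm (hp (redAC_psd h) w)]
    simp only [Matrix.mul_assoc]
  rw [e, trace_red _ _ _ _ (fun a a' b b' c c' => hp_redC h (-w) a a' b b' c c')
    (fun a a' b b' c c' => hp_redC h (-star w) a a' b b' c c')]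
  have : mC ρ * (hp (mC_psd h) (-star w) * mC ρ * hp (mC_psd h) (-w)) = mC ρ := by
    rw [hp_mul_self, hp_mul, self_mul_hp]
    have e5 : 1 + (-star w + 1 + -w) = 1 := by linear_combination -hww
    rw [e5, hp_one]
  rw [this, mC_trace, h1]
  simp

end red

theorem stmt_6 {dA dB dC : ℕ}
    (ρ : Matrix (Fin dA × Fin dB × Fin dC) (Fin dA × Fin dB × Fin dC) ℂ)
    (hρ : ρ.PosSemidef) (hρ1 : ρ.trace = 1)
    (α : ℝ) (hα : α ∈ Set.Ioo (1/2 : ℝ) 1) :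
    (mpow (mpow (redAC ρ) ((1 - α)/(2*α)) * mpow (redC ρ) ((α - 1)/(2*α)) *
        mpow (redBC ρ) ((1 - α)/α) * mpow (redC ρ) ((α - 1)/(2*α)) *
        mpow (redAC ρ) ((1 - α)/(2*α))) (α/(1 - α))).trace ≤ 1 := by
  obtain ⟨ha, hb⟩ := hα
  have hα0 : 0 < α := by linarith
  have h1α : 0 < 1 - α := by linarith
  set s : ℝ := (1 - α) / α with hs
  have e1 : (1 - α)/(2*α) = s / 2 := by rw [hs]; field_simp
  have e2 : (α - 1)/(2*α) = -(s / 2) := by rw [hs]; field_simp; ring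
  set p : ℝ := α / (1 - α) with hp'
  have hsp : p * s = 1 := by rw [hs, hp']; field_simp
  have hs0 : 0 < s := div_pos h1α hα0
  have hs1 : s < 1 := by rw [hs, div_lt_one hα0]; linarith
  rw [e1, e2]
  set M := Fam (redBC_psd hρ) (redC_psd hρ) (redAC_psd hρ) ((s / 2 : ℝ) : ℂ) with hM
  have hK : mpow (redAC ρ) (s / 2) * mpow (redC ρ) (-(s / 2)) *
        mpow (redBC ρ) s * mpow (redC ρ) (-(s / 2)) *
        mpow (redAC ρ) (s / 2) = Mᴴ * M := by
    rw [mpow_eq (redAC_psd hρ), mpow_eq (redBC_psd hρ), mpow_eq (redC_psd hρ), hM]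
    unfold Fam
    have hst : star ((s / 2 : ℝ) : ℂ) = ((s / 2 : ℝ) : ℂ) := Complex.conj_ofReal _
    simp only [Matrix.conjTranspose_mul, hp_star, star_neg, hst]
    have : (s : ℂ) = ((s / 2 : ℝ) : ℂ) + ((s / 2 : ℝ) : ℂ) := by push_cast; ring
    rw [this, ← hp_mul]
    simp only [Matrix.mul_assoc, Complex.ofReal_neg]
  rw [hK, mpow_eq (Matrix.posSemidef_conjTranspose_mul_self M)]
  exact core (redBC_psd hρ) (redC_psd hρ) (redAC_psd hρ) (fun w hw => edge hρ hρ1 w hw) s p hs0 hs1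
    hsp M hM _
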